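/- arXiv:2207.10419 — 4 statements merged into one kernel-verified Lean document; each statement's English description precedes it below -/
import Mathlib

section
/- Let f : ℝ → ℂ be an even Schwartz function and let z ∈ ℂ with Im(z) > 1/2. Then the function u ↦ (ℰf)(u)·u^{−iz} is integrable on (0,∞) with respect to d*u, and ∫₀^∞ (ℰf)(u) u^{−iz} d*u = ζ(1/2 − iz) · ψ_f(z). -/
open MeasureTheory Set

/-- `(ℰ f)(u) = u^{1/2} ∑_{n ≥ 1} f(n u)`. -/
noncomputable def Emap (f : ℝ → ℂ) (u : ℝ) : ℂ :=
  (u : ℂ) ^ ((1 : ℂ)/2) * ∑' n : ℕ, f ((n + 1) * u)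

/-- `ψ_f(z) = ∫₀^∞ f(u) u^{1/2 - iz} du/u`. -/
noncomputable def psi (f : ℝ → ℂ) (z : ℂ) : ℂ :=
  ∫ u in Ioi (0:ℝ), f u * (u : ℂ) ^ ((1 : ℂ)/2 - Complex.I * z) / (u : ℂ)

/-!
On `(0, ∞)` the integrand is the Mellin integrand at `s = 1/2 - iz` of the sum of the dilates
`u ↦ f (n u)`, and `Re s = 1/2 + Im z > 1`. Dilating by `n` multiplies the `L¹` norm of a Mellin
integrand by `n ^ (-Re s)` and its integral by `n ^ (-s)`. The series of the former converges, so
the sum may be integrated term by term, and the latter add up to `ζ(s)`.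
-/

section IntegrableSeries

variable {α ι E : Type*} [MeasurableSpace α] {μ : Measure α} [Countable ι]
  [NormedAddCommGroup E] [CompleteSpace E]

lemma integrable_tsum_of_summable_integral_norm {F : ι → α → E}
    (hF_int : ∀ i, Integrable (F i) μ) (hF_sum : Summable fun i ↦ ∫ a, ‖F i a‖ ∂μ) :
    Integrable (fun a ↦ ∑' i, F i a) μ := by
  have hL1_sum : ∑' i, ‖(hF_int i).toL1 (F i)‖ₑ ≠ ⊤ := by
    simpa only [tsum_enorm_ne_top_iff_summable_norm, L1.norm_of_fun_eq_integral_norm] using hF_sum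
  refine (L1.integrable_coeFn (∑' i, (hF_int i).toL1 (F i))).congr
    ((Lp.coeFn_tsum hL1_sum).trans ?_)
  filter_upwards [ae_all_iff.2 fun i ↦ (hF_int i).coeFn_toL1] with a ha
  exact tsum_congr ha

end IntegrableSeries

section MellinDilation

variable {E : Type*} [NormedAddCommGroup E] [NormedSpace ℂ E]

lemma mellinConvergent_schwartzMap (f : SchwartzMap ℝ E) {s : ℂ} (hs : 0 < s.re) :
    MellinConvergent f s := by
  have h_decay : f =O[Filter.atTop] fun t : ℝ ↦ t ^ (-(s.re + 1)) := by
    refine ((f.isBigO_cocompact_rpow (-(s.re + 1))).mono _root_.atTop_le_cocompact).congr' .rfl ?_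
    filter_upwards [Filter.eventually_ge_atTop 0] with t ht
    rw [Real.norm_of_nonneg ht]
  have h_bounded : f =O[nhdsWithin 0 (Ioi 0)] fun t : ℝ ↦ t ^ (-(0 : ℝ)) := by
    simpa only [neg_zero, Real.rpow_zero] using
      ((f.continuous.tendsto 0).isBigO_one ℝ).mono nhdsWithin_le_nhds
  exact mellinConvergent_of_isBigO_rpow (f.continuous.locallyIntegrable.locallyIntegrableOn _)
    h_decay (lt_add_one _) h_bounded hs

lemma integral_norm_cpow_smul_comp_mul_left (f : ℝ → E) (s : ℂ) {a : ℝ} (ha : 0 < a) :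
    ∫ t in Ioi (0 : ℝ), ‖(t : ℂ) ^ (s - 1) • f (a * t)‖ =
      a ^ (-s.re) * ∫ t in Ioi (0 : ℝ), ‖(t : ℂ) ^ (s - 1) • f t‖ := by
  let g : ℝ → ℝ := fun t ↦ ‖(t : ℂ) ^ (s - 1) • f t‖
  have h_scale : EqOn (fun t : ℝ ↦ ‖(t : ℂ) ^ (s - 1) • f (a * t)‖)
      (fun t ↦ a ^ (1 - s.re) * g (a * t)) (Ioi 0) := by
    intro t (ht : 0 < t)
    have h_cancel : a ^ (1 - s.re) * a ^ (s.re - 1) = 1 := by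
      rw [← Real.rpow_add ha, sub_add_sub_cancel, sub_self, Real.rpow_zero]
    simp only [g, norm_smul, Complex.norm_cpow_eq_rpow_re_of_pos ht,
      Complex.norm_cpow_eq_rpow_re_of_pos (mul_pos ha ht), Complex.sub_re, Complex.one_re,
      Real.mul_rpow ha.le ht.le, ← mul_assoc, h_cancel, one_mul]
  calc ∫ t in Ioi (0 : ℝ), ‖(t : ℂ) ^ (s - 1) • f (a * t)‖
      = a ^ (1 - s.re) * ∫ t in Ioi (0 : ℝ), g (a * t) := by
        rw [setIntegral_congr_fun measurableSet_Ioi h_scale, integral_const_mul]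
    _ = a ^ (1 - s.re) * (a⁻¹ * ∫ t in Ioi (0 : ℝ), g t) := by
        rw [integral_comp_mul_left_Ioi g 0 ha, mul_zero, smul_eq_mul]
    _ = a ^ (-s.re) * ∫ t in Ioi (0 : ℝ), g t := by
        rw [← mul_assoc, ← Real.rpow_neg_one, ← Real.rpow_add ha]
        ring_nf

variable [CompleteSpace E] {f : ℝ → E} {s : ℂ}

lemma hasMellin_tsum_comp_mul_left {ι : Type*} [Countable ι] {a : ι → ℝ} (ha : ∀ i, 0 < a i)
    (ha_sum : Summable fun i ↦ a i ^ (-s.re)) (hf : MellinConvergent f s) :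
    HasMellin (fun t ↦ ∑' i, f (a i * t)) s ((∑' i, (a i : ℂ) ^ (-s)) • mellin f s) := by
  let F : ι → ℝ → E := fun i t ↦ (t : ℂ) ^ (s - 1) • f (a i * t)
  have hF_int (i : ι) : IntegrableOn (F i) (Ioi 0) :=
    (MellinConvergent.comp_mul_left (ha i)).2 hf
  have hF_sum : Summable fun i ↦ ∫ t in Ioi (0 : ℝ), ‖F i t‖ := by
    simpa only [F, integral_norm_cpow_smul_comp_mul_left f s (ha _)] using ha_sum.mul_right _
  have hcpow_sum : Summable fun i ↦ (a i : ℂ) ^ (-s) :=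
    .of_norm (by simpa only [Complex.norm_cpow_eq_rpow_re_of_pos (ha _), Complex.neg_re])
  constructor
  · simpa only [MellinConvergent, IntegrableOn, F, tsum_const_smul''] using
      integrable_tsum_of_summable_integral_norm hF_int hF_sum
  · calc mellin (fun t ↦ ∑' i, f (a i * t)) s
        = ∫ t in Ioi (0 : ℝ), ∑' i, F i t := by simp only [mellin, F, tsum_const_smul'']
      _ = ∑' i, mellin (fun t ↦ f (a i * t)) s :=
          (integral_tsum_of_summable_integral_norm hF_int hF_sum).symm
      _ = ∑' i, (a i : ℂ) ^ (-s) • mellin f s :=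
          tsum_congr fun i ↦ mellin_comp_mul_left f s (ha i)
      _ = (∑' i, (a i : ℂ) ^ (-s)) • mellin f s := hcpow_sum.tsum_smul_const _

lemma hasMellin_tsum_comp_nat_add_one_mul (hs : 1 < s.re) (hf : MellinConvergent f s) :
    HasMellin (fun t ↦ ∑' n : ℕ, f ((n + 1) * t)) s (riemannZeta s • mellin f s) := by
  have h_sum : Summable fun n : ℕ ↦ ((n : ℝ) + 1) ^ (-s.re) := by
    exact_mod_cast (summable_nat_add_iff 1).2 (Real.summable_nat_rpow.2 (neg_lt_neg hs))
  have h_zeta : riemannZeta s = ∑' n : ℕ, (((n : ℝ) + 1 : ℝ) : ℂ) ^ (-s) := by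
    simp only [zeta_eq_tsum_one_div_nat_add_one_cpow hs, Complex.cpow_neg, one_div,
      Complex.ofReal_add, Complex.ofReal_natCast, Complex.ofReal_one]
  rw [h_zeta]
  exact hasMellin_tsum_comp_mul_left (fun n ↦ n.cast_add_one_pos) h_sum hf

end MellinDilation

lemma re_half_sub_I_mul (z : ℂ) : (1 / 2 - Complex.I * z).re = 1 / 2 + z.im := by simp

lemma psi_eq_mellin (f : ℝ → ℂ) (z : ℂ) : psi f z = mellin f (1 / 2 - Complex.I * z) := by
  refine setIntegral_congr_fun measurableSet_Ioi fun u (hu : 0 < u) ↦ ?_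
  simp only [Complex.cpow_sub _ 1 (Complex.ofReal_ne_zero.2 hu.ne'), Complex.cpow_one, smul_eq_mul]
  ring

lemma Emap_mul_cpow_div_eqOn (f : ℝ → ℂ) (z : ℂ) :
    EqOn (fun u : ℝ ↦ Emap f u * (u : ℂ) ^ (-(Complex.I * z)) / (u : ℂ))
      (fun u ↦ (u : ℂ) ^ (1 / 2 - Complex.I * z - 1) • ∑' n : ℕ, f ((n + 1) * u)) (Ioi 0) := by
  intro u (hu : 0 < u)
  have hu_ne : (u : ℂ) ≠ 0 := Complex.ofReal_ne_zero.2 hu.ne'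
  simp only [Emap, Complex.cpow_sub _ 1 hu_ne, sub_eq_add_neg (1 / 2 : ℂ),
    Complex.cpow_add _ _ hu_ne, Complex.cpow_one, smul_eq_mul]
  ring

theorem stmt0_general (f : ℝ → ℂ) {z : ℂ} (hz : 1 / 2 < z.im)
    (hf : MellinConvergent f (1 / 2 - Complex.I * z)) :
    IntegrableOn (fun u : ℝ ↦ Emap f u * (u : ℂ) ^ (-(Complex.I * z)) / (u : ℂ)) (Ioi 0) ∧
    ∫ u in Ioi (0 : ℝ), Emap f u * (u : ℂ) ^ (-(Complex.I * z)) / (u : ℂ) =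
      riemannZeta (1 / 2 - Complex.I * z) * psi f z := by
  have hs : 1 < (1 / 2 - Complex.I * z).re := by
    rw [re_half_sub_I_mul]
    linarith
  obtain ⟨h_int, h_eq⟩ := hasMellin_tsum_comp_nat_add_one_mul hs hf
  have h_congr := Emap_mul_cpow_div_eqOn f z
  rw [integrableOn_congr_fun h_congr measurableSet_Ioi,
    setIntegral_congr_fun measurableSet_Ioi h_congr, psi_eq_mellin]
  exact ⟨h_int, h_eq⟩

theorem stmt0 (f : SchwartzMap ℝ ℂ) (hev : ∀ x : ℝ, f (-x) = f x)
    (z : ℂ) (hz : 1/2 < z.im) :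
    IntegrableOn (fun u : ℝ => Emap (⇑f) u * (u : ℂ) ^ (-(Complex.I * z)) / (u : ℂ))
      (Ioi 0) ∧
    ∫ u in Ioi (0:ℝ), Emap (⇑f) u * (u : ℂ) ^ (-(Complex.I * z)) / (u : ℂ)
      = riemannZeta (1/2 - Complex.I * z) * psi (⇑f) z :=
  stmt0_general f hz (mellinConvergent_schwartzMap f (by rw [re_half_sub_I_mul]; linarith))
end

section
/- Let f : (0,∞) → ℂ be a function of bounded variation such that f(u) = O(u^{−N}) as u → ∞ for every N ∈ ℕ, f(u) = O(u²) as u → 0⁺, and ∫₀^∞ f(t) dt = 0. Then: for every u > 0 the series Σ_{n=1}^∞ f(nu) converges absolutely, so (ℰf)(u) = u^{1/2} Σ_{n=1}^∞ f(nu) is well-defined; (ℰf)(u) = O(u^{1/2}) as u → 0⁺; and for every N ∈ ℕ, (ℰf)(u) = O(u^{−N}) as u → ∞. -/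
open MeasureTheory Set Filter Asymptotics

/-!
The sum `u ∑ f(n u)` is a Riemann sum of mesh `u` for `∫₀^∞ f`. On each cell it errs by at most `u`
times the variation of `f` over that cell, so on the half-line it errs by at most `u V`, where `V`
is the total variation of `f`. Applied to `‖f‖`, this gives absolute convergence; applied to `f`,
whose integral vanishes, it bounds `∑ f(n u)` by `V` uniformly in `u`. The decay at infinity is
inherited term by term: if `f(x) = O(x^{-s})` with `s > 1`, then
`∑ f(n u) = O(ζ(s) u^{-s})`.
-/

open scoped Topology

section Measurability

variable {α E : Type*} [LinearOrder α] [PseudoEMetricSpace E] {f : α → E} {s : Set α}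

lemma edist_le_edist_variationOnFromTo (hf : LocallyBoundedVariationOn f s) {a x y : α}
    (ha : a ∈ s) (hx : x ∈ s) (hy : y ∈ s) :
    edist (f x) (f y) ≤ edist (variationOnFromTo f s a x) (variationOnFromTo f s a y) := by
  wlog hxy : x ≤ y generalizing x y
  · simpa only [edist_comm] using this hy hx (le_of_not_ge hxy)
  have hdiff : variationOnFromTo f s a y - variationOnFromTo f s a x
      = (eVariationOn f (s ∩ Icc x y)).toReal := by
    rw [variationOnFromTo.sub_right hf ha hy hx, variationOnFromTo.eq_of_le f s hxy]
  rw [edist_comm (variationOnFromTo f s a x), edist_dist, Real.dist_eq, hdiff,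
    abs_of_nonneg ENNReal.toReal_nonneg, ENNReal.ofReal_toReal (hf x y hx hy)]
  exact eVariationOn.edist_le f ⟨hx, le_rfl, hxy⟩ ⟨hy, hxy, le_rfl⟩

variable [TopologicalSpace α] [OrderTopology α]

lemma countable_not_continuousWithinAt_of_locallyBoundedVariationOn
    (hf : LocallyBoundedVariationOn f s) :
    {x ∈ s | ¬ContinuousWithinAt f s x}.Countable := by
  rcases s.eq_empty_or_nonempty with rfl | ⟨a, ha⟩
  · simp
  refine (variationOnFromTo.monotoneOn hf ha).countable_not_continuousWithinAt.mono ?_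
  rintro x ⟨hx, hfx⟩
  refine ⟨hx, fun hv => hfx ?_⟩
  rw [ContinuousWithinAt, tendsto_iff_edist_tendsto_0] at hv ⊢
  refine tendsto_of_tendsto_of_tendsto_of_le_of_le' tendsto_const_nhds hv
    (Eventually.of_forall fun _ => zero_le) ?_
  filter_upwards [self_mem_nhdsWithin] with y hy
  exact edist_le_edist_variationOnFromTo hf ha hy hx

lemma aestronglyMeasurable_of_locallyBoundedVariationOn [SecondCountableTopology α]
    [MeasurableSpace α] [BorelSpace α] {μ : Measure α} [NullSingletonClass μ] (hs : MeasurableSet s)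
    (hf : LocallyBoundedVariationOn f s) : AEStronglyMeasurable f (μ.restrict s) := by
  set D := {x ∈ s | ¬ContinuousWithinAt f s x}
  have hD : D.Countable := countable_not_continuousWithinAt_of_locallyBoundedVariationOn hf
  have hcont : ContinuousOn f (s \ D) := fun x hx =>
    (not_not.1 fun h => hx.2 ⟨hx.1, h⟩ : ContinuousWithinAt f s x).mono sdiff_subset
  rw [← Measure.restrict_congr_set (sdiff_null_ae_eq_self (hD.measure_zero μ))]
  exact hcont.aestronglyMeasurable (hs.diff hD.measurableSet)

end Measurability

section Integrability

variable {E : Type*} [NormedAddCommGroup E]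

lemma integrableOn_of_boundedVariationOn {α : Type*} [LinearOrder α] [TopologicalSpace α]
    [OrderTopology α] [SecondCountableTopology α] [MeasurableSpace α] [BorelSpace α]
    {μ : Measure α} [NullSingletonClass μ] {f : α → E} {s : Set α} (hs : MeasurableSet s)
    (hμs : μ s < ⊤) (hf : BoundedVariationOn f s) : IntegrableOn f s μ := by
  rcases s.eq_empty_or_nonempty with rfl | ⟨a, ha⟩
  · exact integrableOn_empty
  refine IntegrableOn.of_bound hμs
    (aestronglyMeasurable_of_locallyBoundedVariationOn hs hf.locallyBoundedVariationOn)
    (‖f a‖ + (eVariationOn f s).toReal) ?_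
  filter_upwards [ae_restrict_mem hs] with x hx
  calc ‖f x‖ ≤ ‖f a‖ + dist (f x) (f a) := dist_eq_norm (f x) (f a) ▸ norm_le_norm_add_norm_sub' _ _
    _ ≤ ‖f a‖ + (eVariationOn f s).toReal := by gcongr; exact hf.dist_le hx ha

lemma intervalIntegrable_of_boundedVariationOn {f : ℝ → E} {a b : ℝ} (hab : a ≤ b)
    (hf : BoundedVariationOn f (Ioc a b)) : IntervalIntegrable f volume a b :=
  (intervalIntegrable_iff_integrableOn_Ioc_of_le hab).2
    (integrableOn_of_boundedVariationOn measurableSet_Ioc (by simp) hf)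

lemma integrableOn_Ioi_of_boundedVariationOn_of_isBigO {F : Type*} [NormedAddCommGroup F]
    {f : ℝ → E} {g : ℝ → F} {a : ℝ} (hf : BoundedVariationOn f (Ioi a)) (hfg : f =O[atTop] g)
    (hg : IntegrableAtFilter g atTop) : IntegrableOn f (Ioi a) := by
  have hIoc (b : ℝ) : IntegrableOn f (Ioc a b) :=
    integrableOn_of_boundedVariationOn measurableSet_Ioc (by simp) (hf.mono Ioc_subset_Ioi_self)
  have hmeas : StronglyMeasurableAtFilter f atTop :=
    ⟨Ioi a, Ioi_mem_atTop a, aestronglyMeasurable_of_locallyBoundedVariationOn measurableSet_Ioi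
      hf.locallyBoundedVariationOn⟩
  obtain ⟨s, hs, hfs⟩ := hfg.integrableAtFilter hmeas hg
  obtain ⟨b, hb⟩ := mem_atTop_sets.1 hs
  refine ((hIoc b).union (hfs.mono_set (show Ici b ⊆ s from hb))).mono_set fun x hx => ?_
  exact (le_total x b).imp (fun hxb => ⟨hx, hxb⟩) id

end Integrability

section RiemannSum

lemma sum_eVariationOn_Ioc_le {α E : Type*} [LinearOrder α] [PseudoEMetricSpace E] (f : α → E)
    {a : ℕ → α} (ha : Monotone a) (n : ℕ) :
    ∑ k ∈ Finset.range n, eVariationOn f (Ioc (a k) (a (k + 1)))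
      ≤ eVariationOn f (Ioc (a 0) (a n)) := by
  induction n with
  | zero => simp
  | succ n ih =>
    rw [Finset.sum_range_succ, ← Ioc_union_Ioc_eq_Ioc (ha n.zero_le) (ha n.le_succ)]
    exact (add_le_add_left ih _).trans
      (eVariationOn.add_le_union f fun x hx y hy => hx.2.trans hy.1.le)

variable {E : Type*} [NormedAddCommGroup E] [NormedSpace ℝ E] [CompleteSpace E] {f : ℝ → E}

lemma norm_smul_sub_integral_le_mul_eVariationOn {a b : ℝ} (hab : a ≤ b)
    (hf : BoundedVariationOn f (Ioc a b)) :
    ‖(b - a) • f b - ∫ x in a..b, f x‖ ≤ (b - a) * (eVariationOn f (Ioc a b)).toReal := by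
  rw [← intervalIntegral.integral_const, ← intervalIntegral.integral_sub
    intervalIntegrable_const (intervalIntegrable_of_boundedVariationOn hab hf), mul_comm,
    ← abs_of_nonneg (sub_nonneg.2 hab)]
  refine intervalIntegral.norm_integral_le_of_norm_le_const fun x hx => ?_
  rw [uIoc_of_le hab] at hx
  rw [← dist_eq_norm]
  exact hf.dist_le ⟨hx.1.trans_le hx.2, le_rfl⟩ hx

lemma norm_sum_smul_sub_integral_le_mul_eVariationOn {a : ℕ → ℝ} {δ : ℝ} (ha : Monotone a)
    (hδ : ∀ k, a (k + 1) - a k ≤ δ) {n : ℕ} (hf : BoundedVariationOn f (Ioc (a 0) (a n))) :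
    ‖∑ k ∈ Finset.range n, (a (k + 1) - a k) • f (a (k + 1)) - ∫ x in a 0..a n, f x‖
      ≤ δ * (eVariationOn f (Ioc (a 0) (a n))).toReal := by
  have hδ0 : 0 ≤ δ := (sub_nonneg.2 (ha (Nat.le_succ 0))).trans (hδ 0)
  have hcell {k : ℕ} (hk : k < n) : BoundedVariationOn f (Ioc (a k) (a (k + 1))) :=
    hf.mono (Ioc_subset_Ioc (ha k.zero_le) (ha hk))
  have hint (k : ℕ) (hk : k < n) : IntervalIntegrable f volume (a k) (a (k + 1)) :=
    intervalIntegrable_of_boundedVariationOn (ha k.le_succ) (hcell hk)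
  rw [← intervalIntegral.sum_integral_adjacent_intervals hint, ← Finset.sum_sub_distrib]
  calc ‖∑ k ∈ Finset.range n, ((a (k + 1) - a k) • f (a (k + 1)) - ∫ x in a k..a (k + 1), f x)‖
      ≤ ∑ k ∈ Finset.range n, δ * (eVariationOn f (Ioc (a k) (a (k + 1)))).toReal := by
        refine norm_sum_le_of_le _ fun k hk => ?_
        exact (norm_smul_sub_integral_le_mul_eVariationOn (ha k.le_succ)
          (hcell (Finset.mem_range.1 hk))).trans (by gcongr; exact hδ k)
    _ = δ * (∑ k ∈ Finset.range n, eVariationOn f (Ioc (a k) (a (k + 1)))).toReal := by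
        rw [← Finset.mul_sum, ENNReal.toReal_sum fun k hk => hcell (Finset.mem_range.1 hk)]
    _ ≤ δ * (eVariationOn f (Ioc (a 0) (a n))).toReal :=
        mul_le_mul_of_nonneg_left
          (ENNReal.toReal_mono hf (sum_eVariationOn_Ioc_le f ha n)) hδ0

lemma norm_smul_sum_range_sub_integral_le_mul_eVariationOn (hf : BoundedVariationOn f (Ioi 0))
    {u : ℝ} (hu : 0 ≤ u) (n : ℕ) :
    ‖u • ∑ k ∈ Finset.range n, f ((k + 1) * u) - ∫ x in (0 : ℝ)..n * u, f x‖
      ≤ u * (eVariationOn f (Ioi 0)).toReal := by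
  have hmesh (k : ℕ) : ((k : ℝ) + 1) * u - k * u = u := by ring
  have hsub : Ioc 0 (n * u) ⊆ Ioi 0 := Ioc_subset_Ioi_self
  have hpartition := norm_sum_smul_sub_integral_le_mul_eVariationOn (f := f) (n := n) (δ := u)
    (a := fun k : ℕ => (k : ℝ) * u) (fun _ _ hkl => by dsimp only; gcongr)
    (fun k => by push_cast; exact (hmesh k).le)
  simp only [Nat.cast_add, Nat.cast_one, Nat.cast_zero, zero_mul, hmesh, ← Finset.smul_sum]
    at hpartition
  exact (hpartition (hf.mono hsub)).trans
    (mul_le_mul_of_nonneg_left (ENNReal.toReal_mono hf (eVariationOn.mono f hsub)) hu)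

end RiemannSum

section SampleSum

variable {E : Type*} [NormedAddCommGroup E] {f : ℝ → E} {u : ℝ}

lemma isBigO_tsum_sample_atTop {s : ℝ} (hs : 1 < s) (hf : f =O[atTop] fun x => x ^ (-s)) :
    (fun u => ∑' n : ℕ, f ((n + 1) * u)) =O[atTop] fun u => u ^ (-s) := by
  obtain ⟨C, hC⟩ := hf.bound
  obtain ⟨R, hR⟩ := eventually_atTop.1 hC
  have hzeta : Summable fun n : ℕ => ((n : ℝ) + 1) ^ (-s) := by
    exact_mod_cast (summable_nat_add_iff 1).2 (Real.summable_nat_rpow.2 (neg_lt_neg hs))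
  refine IsBigO.of_bound (C * ∑' n : ℕ, ((n : ℝ) + 1) ^ (-s)) ?_
  filter_upwards [eventually_ge_atTop R, eventually_ge_atTop 0] with u huR hu
  have hsum := (hzeta.hasSum.mul_left C).mul_right ‖u ^ (-s)‖
  refine tsum_of_norm_bounded hsum fun n => ?_
  have hle : u ≤ (n + 1) * u := le_mul_of_one_le_left hu (by simp)
  have hterm := hR _ (huR.trans hle)
  rwa [Real.mul_rpow (by positivity) hu, norm_mul, Real.norm_of_nonneg (by positivity),
    ← mul_assoc] at hterm

lemma isBigO_rpow_smul_atTop [NormedSpace ℝ E] {r s t : ℝ} (hrst : r + s ≤ t)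
    (hf : f =O[atTop] fun u => u ^ s) : (fun u => u ^ r • f u) =O[atTop] fun u => u ^ t := by
  refine ((isBigO_refl _ _).smul hf).trans (IsBigO.of_bound' ?_)
  filter_upwards [eventually_ge_atTop 1] with u hu
  have hu0 : 0 < u := one_pos.trans_le hu
  rw [smul_eq_mul, ← Real.rpow_add hu0, Real.norm_of_nonneg (by positivity),
    Real.norm_of_nonneg (by positivity)]
  exact Real.rpow_le_rpow_of_exponent_le hu hrst

lemma summable_norm_sample_of_boundedVariationOn (hf : BoundedVariationOn f (Ioi 0))
    (hint : IntegrableOn f (Ioi 0)) (hu : 0 < u) :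
    Summable fun n : ℕ => ‖f ((n + 1) * u)‖ := by
  have hnorm : BoundedVariationOn (fun x => ‖f x‖) (Ioi 0) :=
    lipschitzWith_one_norm.comp_boundedVariationOn hf
  set V := (eVariationOn (fun x => ‖f x‖) (Ioi 0)).toReal
  refine summable_of_sum_range_le (c := ((∫ x in Ioi (0 : ℝ), ‖f x‖) + u * V) / u)
    (fun _ => norm_nonneg _) fun n => ?_
  have hriemann := le_of_abs_le
    (norm_smul_sum_range_sub_integral_le_mul_eVariationOn hnorm hu.le n)
  have hle : ∫ x in (0 : ℝ)..n * u, ‖f x‖ ≤ ∫ x in Ioi (0 : ℝ), ‖f x‖ := by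
    rw [intervalIntegral.integral_of_le (by positivity)]
    exact setIntegral_mono_set hint.norm (Eventually.of_forall fun _ => norm_nonneg _)
      Ioc_subset_Ioi_self.eventuallyLE
  rw [smul_eq_mul] at hriemann
  rw [le_div_iff₀' hu]
  linarith

variable [NormedSpace ℝ E] [CompleteSpace E]

lemma norm_smul_tsum_sub_integral_le_mul_eVariationOn (hf : BoundedVariationOn f (Ioi 0))
    (hint : IntegrableOn f (Ioi 0)) (hu : 0 < u) :
    ‖u • ∑' n : ℕ, f ((n + 1) * u) - ∫ x in Ioi (0 : ℝ), f x‖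
      ≤ u * (eVariationOn f (Ioi 0)).toReal := by
  have hsum := (summable_norm_sample_of_boundedVariationOn hf hint hu).of_norm.tendsto_sum_tsum_nat
  have hintegral := intervalIntegral_tendsto_integral_Ioi 0 hint
    (tendsto_natCast_atTop_atTop.atTop_mul_const hu)
  exact le_of_tendsto ((hsum.const_smul u).sub hintegral).norm
    (Eventually.of_forall (norm_smul_sum_range_sub_integral_le_mul_eVariationOn hf hu.le))

lemma norm_tsum_sample_le_eVariationOn (hf : BoundedVariationOn f (Ioi 0))
    (hint : IntegrableOn f (Ioi 0)) (hzero : ∫ x in Ioi (0 : ℝ), f x = 0) (hu : 0 < u) :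
    ‖∑' n : ℕ, f ((n + 1) * u)‖ ≤ (eVariationOn f (Ioi 0)).toReal := by
  have herror := norm_smul_tsum_sub_integral_le_mul_eVariationOn hf hint hu
  rw [hzero, sub_zero, norm_smul, Real.norm_of_nonneg hu.le] at herror
  exact le_of_mul_le_mul_left herror hu

end SampleSum

theorem stmt2_general {E : Type*} [NormedAddCommGroup E] [NormedSpace ℝ E] [CompleteSpace E]
    {f : ℝ → E} (hBV : BoundedVariationOn f (Ioi 0))
    (hdecay : ∀ N : ℕ, f =O[atTop] fun u : ℝ => u ^ (-(N : ℤ)))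
    (hint : ∫ t in Ioi (0 : ℝ), f t = 0) :
    (∀ u : ℝ, 0 < u → Summable fun n : ℕ => ‖f ((n + 1) * u)‖) ∧
    (fun u : ℝ => u ^ ((1 : ℝ) / 2) • ∑' n : ℕ, f ((n + 1) * u))
      =O[𝓝[>] 0] (fun u : ℝ => u ^ ((1 : ℝ) / 2)) ∧
    ∀ N : ℕ, (fun u : ℝ => u ^ ((1 : ℝ) / 2) • ∑' n : ℕ, f ((n + 1) * u))
      =O[atTop] fun u : ℝ => u ^ (-(N : ℤ)) := by
  have hrpow (N : ℕ) : f =O[atTop] fun u : ℝ => u ^ (-(N : ℝ)) := by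
    simpa only [← Real.rpow_intCast, Int.cast_neg, Int.cast_natCast] using hdecay N
  have hintegrable : IntegrableOn f (Ioi 0) :=
    integrableOn_Ioi_of_boundedVariationOn_of_isBigO hBV (hrpow 2)
      ⟨Ioi 1, Ioi_mem_atTop 1, integrableOn_Ioi_rpow_of_lt (by norm_num) one_pos⟩
  refine ⟨fun u => summable_norm_sample_of_boundedVariationOn hBV hintegrable, ?_, fun N => ?_⟩
  · refine IsBigO.of_bound (eVariationOn f (Ioi 0)).toReal ?_
    filter_upwards [self_mem_nhdsWithin] with u hu
    rw [norm_smul, mul_comm]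
    gcongr
    exact norm_tsum_sample_le_eVariationOn hBV hintegrable hint hu
  · have hsum := isBigO_tsum_sample_atTop (by norm_cast; omega) (hrpow (N + 2))
    simp only [← Real.rpow_intCast]
    exact isBigO_rpow_smul_atTop (by push_cast; linarith) hsum

lemma Emap_eventuallyEq (f : ℝ → ℂ) {l : Filter ℝ} (hl : ∀ᶠ u in l, 0 ≤ u) :
    Emap f =ᶠ[l] fun u => u ^ ((1 : ℝ) / 2) • ∑' n : ℕ, f ((n + 1) * u) := by
  filter_upwards [hl] with u hu
  rw [Emap, Complex.real_smul, Complex.ofReal_cpow hu]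
  norm_num

theorem stmt2 (f : ℝ → ℂ)
    (hBV : BoundedVariationOn f (Ioi 0))
    (hdecay : ∀ N : ℕ, f =O[atTop] fun u : ℝ => u ^ (-(N:ℤ)))
    (h0 : f =O[nhdsWithin 0 (Ioi 0)] fun u : ℝ => u ^ 2)
    (hint : ∫ t in Ioi (0:ℝ), f t = 0) :
    (∀ u : ℝ, 0 < u → Summable fun n : ℕ => ‖f ((n + 1) * u)‖) ∧
    (Emap f) =O[nhdsWithin 0 (Ioi 0)] (fun u : ℝ => u ^ ((1:ℝ)/2)) ∧
    (∀ N : ℕ, (Emap f) =O[atTop] fun u : ℝ => u ^ (-(N:ℤ))) := by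
  obtain ⟨hsum, hzero, htop⟩ := stmt2_general hBV hdecay hint
  have hpos : ∀ᶠ u : ℝ in 𝓝[>] 0, 0 ≤ u :=
    eventually_mem_nhdsWithin.mono fun _ hu => (mem_Ioi.1 hu).le
  exact ⟨hsum, (Emap_eventuallyEq f hpos).trans_isBigO hzero,
    fun N => (Emap_eventuallyEq f (eventually_ge_atTop 0)).trans_isBigO (htop N)⟩
end

section
/- Let f : (0,∞) → ℂ be a function of bounded variation such that f(u) = O(u^{−N}) as u → ∞ for every N ∈ ℕ, f(u) = O(u²) as u → 0⁺, and ∫₀^∞ f(t) dt = 0. Let g = ℰf and let μ > 1. Then for every u > 0 the series Σ_{k∈ℤ} g(μ^k u) converges absolutely (with geometric bounds on the tails), and the function (Σ_μ g)(u) = Σ_{k∈ℤ} g(μ^k u) is a bounded measurable function on (0,∞) satisfying (Σ_μ g)(μu) = (Σ_μ g)(u) for all u > 0, hence descends to ℝ₊*/μ^ℤ. -/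
/-!
`u ∑ f (n u)` is a Riemann sum of mesh `u` for `∫ f = 0`, and a Riemann sum of mesh `u` differs from
the integral by at most `u` times the total variation. Hence `∑ f (n u)` is bounded by the total
variation of `f` for every `u > 0`, while the decay of `f` makes it `O(u⁻¹)`. The factor `u ^ (1/2)`
turns these two bounds into `ℰf u = O(exp (-|log u| / 2))`. In the coordinate `log u`, the orbit
`μ ^ k * u` is an arithmetic progression, so the terms of the orbit sum decay geometrically in
`|k|`, uniformly once `u` has been moved along its orbit into the region `|log u| ≤ |log μ|`.
-/

open MeasureTheory Set Filter Asymptotics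

/-- `(Σ_μ g)(u) = ∑_{k ∈ ℤ} g(μ^k u)`. -/
noncomputable def SigmaMu (μ : ℝ) (g : ℝ → ℂ) (u : ℝ) : ℂ :=
  ∑' k : ℤ, g (μ ^ k * u)

section BoundedVariation

theorem measurable_domRestrict_of_locallyBoundedVariationOn_real {f : ℝ → ℝ} {s : Set ℝ}
    [s.OrdConnected] (hf : LocallyBoundedVariationOn f s) : Measurable (s.domRestrict f) := by
  obtain ⟨p, q, hp, hq, rfl⟩ := hf.exists_monotoneOn_sub_monotoneOn
  exact (monotoneOn_iff_monotone.1 hp).measurable.sub (monotoneOn_iff_monotone.1 hq).measurable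

variable {V : Type*} [NormedAddCommGroup V] [NormedSpace ℝ V] [FiniteDimensional ℝ V]

theorem measurable_domRestrict_of_locallyBoundedVariationOn [MeasurableSpace V] [BorelSpace V]
    {f : ℝ → V} {s : Set ℝ} [s.OrdConnected] (hf : LocallyBoundedVariationOn f s) :
    Measurable (s.domRestrict f) := by
  let A := (Module.Basis.ofVectorSpace ℝ V).equivFun.toContinuousLinearEquiv
  have hcoord : Measurable (s.domRestrict (A ∘ f)) := measurable_pi_iff.2 fun i =>
    measurable_domRestrict_of_locallyBoundedVariationOn_real
      (((LipschitzWith.eval i).comp A.lipschitz).comp_locallyBoundedVariationOn hf)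
  convert! A.symm.continuous.measurable.comp hcoord using 1
  ext x
  simp

theorem aestronglyMeasurable_restrict_of_boundedVariationOn {f : ℝ → V} {s : Set ℝ}
    [s.OrdConnected] (hf : BoundedVariationOn f s) :
    AEStronglyMeasurable f (volume.restrict s) := by
  borelize V
  exact ((aemeasurable_restrict_iff_comap_subtype ‹s.OrdConnected›.measurableSet).2
    (measurable_domRestrict_of_locallyBoundedVariationOn
      hf.locallyBoundedVariationOn).aemeasurable).aestronglyMeasurable

theorem exists_norm_le_of_boundedVariationOn {α E : Type*} [LinearOrder α]
    [SeminormedAddCommGroup E] {f : α → E} {s : Set α} (hf : BoundedVariationOn f s) :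
    ∃ M, ∀ x ∈ s, ‖f x‖ ≤ M := by
  rcases s.eq_empty_or_nonempty with rfl | ⟨y, hy⟩
  · simp
  · refine ⟨‖f y‖ + (eVariationOn f s).toReal, fun x hx => ?_⟩
    calc ‖f x‖ ≤ ‖f y‖ + ‖f x - f y‖ := norm_le_norm_add_norm_sub' _ _
      _ ≤ _ := by grw [← dist_eq_norm, hf.dist_le hx hy]

theorem integrableOn_of_boundedVariationOn_s3 {f : ℝ → V} {s : Set ℝ} [s.OrdConnected]
    (hf : BoundedVariationOn f s) (hs : volume s ≠ ⊤) : IntegrableOn f s := by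
  obtain ⟨M, hM⟩ := exists_norm_le_of_boundedVariationOn hf
  exact IntegrableOn.of_bound hs.lt_top (aestronglyMeasurable_restrict_of_boundedVariationOn hf) M
    (ae_restrict_of_forall_mem ‹s.OrdConnected›.measurableSet hM)

theorem integrableOn_Ioi_of_boundedVariationOn_of_isBigO_rpow {f : ℝ → V} {a b : ℝ}
    (hf : BoundedVariationOn f (Ioi b)) (ha : 1 < a)
    (hdecay : f =O[atTop] fun x : ℝ => x ^ (-a)) : IntegrableOn f (Ioi b) := by
  have hmeas : StronglyMeasurableAtFilter f atTop :=
    ⟨Ioi b, Ioi_mem_atTop b, aestronglyMeasurable_restrict_of_boundedVariationOn hf⟩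
  obtain ⟨c, hc⟩ := integrableAtFilter_atTop_iff.1 <|
    hdecay.integrableAtFilter hmeas (integrableAtFilter_rpow_atTop_iff.2 (neg_lt_neg ha))
  have hnear : IntegrableOn f (Ioo b c) :=
    integrableOn_of_boundedVariationOn_s3 (hf.mono Ioo_subset_Ioi_self) (by simp)
  exact (hnear.union hc).mono_set fun x hx => (lt_or_ge x c).imp (⟨hx, ·⟩) id

end BoundedVariation

section RiemannSum

variable {E : Type*} [NormedAddCommGroup E] [NormedSpace ℝ E] [CompleteSpace E] {f : ℝ → E}

theorem norm_sub_smul_sub_integral_le {s : Set ℝ} {a b : ℝ} (hf : BoundedVariationOn f s)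
    (hab : a ≤ b) (hs : Ioc a b ⊆ s) (hi : IntervalIntegrable f volume a b) :
    ‖(b - a) • f b - ∫ t in a..b, f t‖ ≤ (eVariationOn f s).toReal * (b - a) := by
  rcases hab.eq_or_lt with rfl | hlt
  · simp
  have heq : (b - a) • f b - ∫ t in a..b, f t = ∫ t in a..b, (f b - f t) := by
    rw [intervalIntegral.integral_sub intervalIntegrable_const hi,
      intervalIntegral.integral_const]
  rw [heq]
  have hosc : ∀ t ∈ uIoc a b, ‖f b - f t‖ ≤ (eVariationOn f s).toReal := fun t ht => by
    rw [uIoc_of_le hab] at ht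
    rw [← dist_eq_norm]
    exact hf.dist_le (hs (right_mem_Ioc.2 hlt)) (hs ht)
  simpa [abs_of_pos (sub_pos.2 hlt)] using
    intervalIntegral.norm_integral_le_of_norm_le_const hosc

theorem norm_sum_sub_smul_sub_integral_le {x : ℕ → ℝ} (hx : StrictMono x) {δ : ℝ}
    (hδ : ∀ n, x (n + 1) - x n ≤ δ) {N : ℕ} (hf : BoundedVariationOn f (Ioc (x 0) (x N)))
    (hi : IntervalIntegrable f volume (x 0) (x N)) :
    ‖∑ n ∈ Finset.range N, (x (n + 1) - x n) • f (x (n + 1)) - ∫ t in x 0..x N, f t‖ ≤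
      (eVariationOn f (Ioc (x 0) (x N))).toReal * δ := by
  set s := Ioc (x 0) (x N)
  have hle : ∀ n, x n ≤ x (n + 1) := fun n => hx.monotone n.le_succ
  have hpiece : ∀ n < N, IntervalIntegrable f volume (x n) (x (n + 1)) := fun n hn =>
    hi.mono_set <| by
      rw [uIcc_of_le (hle n), uIcc_of_le (hx.monotone N.zero_le)]
      exact Icc_subset_Icc (hx.monotone n.zero_le) (hx.monotone hn)
  have hcell : ∀ n ∈ Finset.range N,
      ‖(x (n + 1) - x n) • f (x (n + 1)) - ∫ t in x n..x (n + 1), f t‖ ≤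
        (eVariationOn f (s ∩ Icc (x n) (x (n + 1)))).toReal * δ := fun n hn => by
    rw [Finset.mem_range] at hn
    have hsub : Ioc (x n) (x (n + 1)) ⊆ s ∩ Icc (x n) (x (n + 1)) := subset_inter
      (Ioc_subset_Ioc (hx.monotone n.zero_le) (hx.monotone hn)) Ioc_subset_Icc_self
    grw [norm_sub_smul_sub_integral_le (hf.mono inter_subset_left) (hle n) hsub (hpiece n hn),
      hδ n]
  have hvar : ∑ n ∈ Finset.range N, eVariationOn f (s ∩ Icc (x n) (x (n + 1))) =
      eVariationOn f s := by
    rw [eVariationOn.sum f (s := s) hx.monotone fun i hi0 hiN => ⟨hx hi0, hx.monotone hiN.le⟩,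
      inter_eq_left.2 Ioc_subset_Icc_self]
  rw [← intervalIntegral.sum_integral_adjacent_intervals hpiece, ← Finset.sum_sub_distrib]
  calc _ ≤ ∑ n ∈ Finset.range N, (eVariationOn f (s ∩ Icc (x n) (x (n + 1)))).toReal * δ :=
        norm_sum_le_of_le _ hcell
    _ = (eVariationOn f s).toReal * δ := by
        rw [← Finset.sum_mul, ← ENNReal.toReal_sum fun n _ => hf.mono inter_subset_left, hvar]

theorem norm_smul_tsum_sub_integral_Ioi_le (hf : BoundedVariationOn f (Ioi 0))
    (hi : IntegrableOn f (Ioi 0)) {u : ℝ} (hu : 0 < u)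
    (hs : Summable fun n : ℕ => f ((n + 1) * u)) :
    ‖u • ∑' n : ℕ, f ((n + 1) * u) - ∫ t in Ioi 0, f t‖ ≤ (eVariationOn f (Ioi 0)).toReal * u := by
  have hpartial : ∀ N : ℕ, ‖u • ∑ n ∈ Finset.range N, f ((n + 1) * u) - ∫ t in 0..N * u, f t‖ ≤
      (eVariationOn f (Ioi 0)).toReal * u := fun N => by
    have hbound := norm_sum_sub_smul_sub_integral_le (f := f) (x := fun n : ℕ => n * u) (δ := u)
      (N := N) (fun m n hmn => by dsimp only; gcongr) (fun n => by push_cast; linarith)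
      (hf.mono fun t ht => by simpa using ht.1)
      ((intervalIntegrable_iff_integrableOn_Ioc_of_le (by simpa using by positivity)).2
        (hi.mono_set fun t ht => by simpa using ht.1))
    simp only [Nat.cast_add, Nat.cast_one, ← sub_mul, add_sub_cancel_left, one_mul,
      Nat.cast_zero, zero_mul, ← Finset.smul_sum] at hbound
    have hmono := ENNReal.toReal_mono hf <|
      eVariationOn.mono f (Ioc_subset_Ioi_self : Ioc 0 (N * u) ⊆ Ioi 0)
    grw [hbound, hmono]
  have hsum := hs.hasSum.tendsto_sum_nat.const_smul u
  have hint := intervalIntegral_tendsto_integral_Ioi 0 hi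
    (tendsto_natCast_atTop_atTop.atTop_mul_const hu)
  exact le_of_tendsto (hsum.sub hint).norm (.of_forall hpartial)

theorem norm_tsum_le_eVariationOn_of_integral_eq_zero (hf : BoundedVariationOn f (Ioi 0))
    (hi : IntegrableOn f (Ioi 0)) (hint : ∫ t in Ioi (0 : ℝ), f t = 0) {u : ℝ} (hu : 0 < u)
    (hs : Summable fun n : ℕ => f ((n + 1) * u)) :
    ‖∑' n : ℕ, f ((n + 1) * u)‖ ≤ (eVariationOn f (Ioi 0)).toReal := by
  have h := norm_smul_tsum_sub_integral_Ioi_le hf hi hu hs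
  rw [hint, sub_zero, norm_smul, Real.norm_of_nonneg hu.le, mul_comm] at h
  exact le_of_mul_le_mul_right h hu

end RiemannSum

section PowerDecay

variable {E : Type*} [NormedAddCommGroup E] {f : ℝ → E} {a C : ℝ}

theorem exists_norm_le_mul_rpow_neg (ha : 0 ≤ a) {M : ℝ} (hM : ∀ x ∈ Ioi 0, ‖f x‖ ≤ M)
    (hdecay : f =O[atTop] fun x : ℝ => x ^ (-a)) :
    ∃ C, ∀ x > 0, ‖f x‖ ≤ C * x ^ (-a) := by
  have hM0 : 0 ≤ M := (norm_nonneg _).trans (hM 1 (mem_Ioi.2 one_pos))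
  obtain ⟨c, hc0, hc⟩ := hdecay.exists_pos
  obtain ⟨R, hR, hR0⟩ :=
    ((eventually_forall_ge_atTop.2 hc.bound).and (eventually_gt_atTop 0)).exists
  refine ⟨c + M * R ^ a, fun x hx => ?_⟩
  rcases le_total R x with h | h
  · calc ‖f x‖ ≤ c * x ^ (-a) := by
          simpa [abs_of_pos (Real.rpow_pos_of_pos hx _)] using hR x h
      _ ≤ _ := by gcongr; exact le_add_of_nonneg_right (by positivity)
  · have hone : 1 ≤ R ^ a * x ^ (-a) := by
      rw [Real.rpow_neg hx.le, ← div_eq_mul_inv, one_le_div (by positivity)]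
      gcongr
    calc ‖f x‖ ≤ M * 1 := by simpa using hM x hx
      _ ≤ M * (R ^ a * x ^ (-a)) := by gcongr
      _ ≤ (c + M * R ^ a) * x ^ (-a) := by
        rw [← mul_assoc]
        gcongr
        exact le_add_of_nonneg_left hc0.le

theorem norm_apply_nat_mul_le (hf : ∀ x > 0, ‖f x‖ ≤ C * x ^ (-a)) {u : ℝ} (hu : 0 < u) (n : ℕ) :
    ‖f ((n + 1) * u)‖ ≤ C * u ^ (-a) * ((n + 1 : ℕ) : ℝ) ^ (-a) := by
  calc _ ≤ C * ((n + 1) * u) ^ (-a) := hf _ (by positivity)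
    _ = _ := by rw [Real.mul_rpow (by positivity) hu.le]; push_cast; ring

theorem summable_nat_succ_rpow_neg (ha : 1 < a) :
    Summable fun n : ℕ => ((n + 1 : ℕ) : ℝ) ^ (-a) :=
  (summable_nat_add_iff 1).2 (Real.summable_nat_rpow.2 (neg_lt_neg ha))

theorem summable_apply_nat_mul [CompleteSpace E] (ha : 1 < a)
    (hf : ∀ x > 0, ‖f x‖ ≤ C * x ^ (-a)) {u : ℝ} (hu : 0 < u) :
    Summable fun n : ℕ => f ((n + 1) * u) :=
  .of_norm_bounded ((summable_nat_succ_rpow_neg ha).mul_left _) (norm_apply_nat_mul_le hf hu)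

theorem norm_tsum_apply_nat_mul_le (ha : 1 < a) (hf : ∀ x > 0, ‖f x‖ ≤ C * x ^ (-a))
    {u : ℝ} (hu : 0 < u) :
    ‖∑' n : ℕ, f ((n + 1) * u)‖ ≤ C * u ^ (-a) * ∑' n : ℕ, ((n + 1 : ℕ) : ℝ) ^ (-a) :=
  tsum_of_norm_bounded ((summable_nat_succ_rpow_neg ha).hasSum.mul_left _)
    (norm_apply_nat_mul_le hf hu)

end PowerDecay

section Measurability

theorem measurable_tsum_of_summable {ι α M : Type*} [Countable ι] [MeasurableSpace α]
    [AddCommMonoid M] [TopologicalSpace M] [TopologicalSpace.PseudoMetrizableSpace M]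
    [MeasurableSpace M] [BorelSpace M] [MeasurableAdd₂ M] {F : ι → α → M}
    (hF : ∀ i, Measurable (F i)) (hs : ∀ x, Summable fun i => F i x) :
    Measurable fun x => ∑' i, F i x :=
  measurable_of_tendsto_metrizable' atTop
    (fun s => Finset.measurable_fun_sum s fun i _ => hF i)
    (tendsto_pi_nhds.2 fun x => (hs x).hasSum)

theorem measurable_Ioi_comp_mul_left {β : Type*} [MeasurableSpace β] {f : ℝ → β}
    (hf : Measurable fun x : Ioi (0 : ℝ) => f x) {c : ℝ} (hc : 0 < c) :
    Measurable fun x : Ioi (0 : ℝ) => f (c * x) :=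
  hf.comp (g := fun x : Ioi (0 : ℝ) => f x) (f := fun x : Ioi (0 : ℝ) => ⟨c * x, mul_pos hc x.2⟩) <|
    Measurable.subtype_mk (by fun_prop)

theorem measurable_Emap {f : ℝ → ℂ} (hf : Measurable fun x : Ioi (0 : ℝ) => f x)
    (hs : ∀ u > 0, Summable fun n : ℕ => f ((n + 1) * u)) :
    Measurable fun u : Ioi (0 : ℝ) => Emap f u :=
  Measurable.mul (by fun_prop) <| measurable_tsum_of_summable
    (fun n => measurable_Ioi_comp_mul_left hf n.cast_add_one_pos) fun u => hs u u.2

theorem measurable_SigmaMu {g : ℝ → ℂ} (hg : Measurable fun x : Ioi (0 : ℝ) => g x) {μ : ℝ}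
    (hμ : 0 < μ) (hs : ∀ u > 0, Summable fun k : ℤ => g (μ ^ k * u)) :
    Measurable fun u : Ioi (0 : ℝ) => SigmaMu μ g u :=
  measurable_tsum_of_summable (fun k => measurable_Ioi_comp_mul_left hg (zpow_pos hμ k))
    fun u => hs u u.2

end Measurability

section OrbitSum

theorem summable_pow_natAbs {r : ℝ} (h0 : 0 ≤ r) (h1 : r < 1) :
    Summable fun k : ℤ => r ^ k.natAbs := by
  refine summable_int_iff_summable_nat_and_neg.2 ⟨?_, ?_⟩ <;>
    simpa using summable_geometric_of_lt_one h0 h1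

theorem exp_neg_mul_abs_log_lt_one {s μ : ℝ} (hs : 0 < s) (hμ0 : 0 < μ) (hμ : μ ≠ 1) :
    Real.exp (-s * |Real.log μ|) < 1 := by
  have hlog : 0 < |Real.log μ| := abs_pos.2 (Real.log_ne_zero_of_pos_of_ne_one hμ0 hμ)
  rw [Real.exp_lt_one_iff]
  nlinarith

theorem exists_abs_log_zpow_mul_le {μ u : ℝ} (hμ0 : 0 < μ) (hμ : μ ≠ 1) (hu : 0 < u) :
    ∃ m : ℤ, |Real.log (μ ^ m * u)| ≤ |Real.log μ| := by
  have hlog : Real.log μ ≠ 0 := Real.log_ne_zero_of_pos_of_ne_one hμ0 hμ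
  set q := Real.log u / Real.log μ with hq
  have hfract : Real.log (μ ^ (-⌊q⌋) * u) = Int.fract q * Real.log μ := by
    rw [Real.log_mul (zpow_pos hμ0 _).ne' hu.ne', Real.log_zpow, Int.fract, sub_mul, hq,
      div_mul_cancel₀ _ hlog]
    push_cast
    ring
  refine ⟨-⌊q⌋, ?_⟩
  rw [hfract, abs_mul, Int.abs_fract]
  exact mul_le_of_le_one_left (abs_nonneg _) (Int.fract_lt_one q).le

theorem norm_apply_zpow_mul_le {E : Type*} [SeminormedAddCommGroup E] {g : ℝ → E} {K s : ℝ}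
    (hs : 0 ≤ s) (hg : ∀ u > 0, ‖g u‖ ≤ K * Real.exp (-s * |Real.log u|)) {μ u : ℝ} (hμ : 0 < μ)
    (hu : 0 < u) (k : ℤ) :
    ‖g (μ ^ k * u)‖ ≤
      K * Real.exp (s * |Real.log u|) * Real.exp (-s * |Real.log μ|) ^ k.natAbs := by
  have hK : 0 ≤ K := by simpa using (norm_nonneg _).trans (hg 1 one_pos)
  have hlog : k.natAbs * |Real.log μ| - |Real.log u| ≤ |Real.log (μ ^ k * u)| := by
    rw [Real.log_mul (zpow_pos hμ k).ne' hu.ne', Real.log_zpow, Nat.cast_natAbs, Int.cast_abs,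
      ← abs_mul]
    simpa using abs_sub_abs_le_abs_sub (k * Real.log μ) (-Real.log u)
  calc _ ≤ K * Real.exp (-s * |Real.log (μ ^ k * u)|) := hg _ (by positivity)
    _ ≤ K * Real.exp (s * |Real.log u| + k.natAbs * (-s * |Real.log μ|)) := by
        gcongr
        nlinarith
    _ = _ := by rw [Real.exp_add, Real.exp_nat_mul, mul_assoc]

theorem SigmaMu_zpow_mul {μ : ℝ} (hμ : μ ≠ 0) (g : ℝ → ℂ) (m : ℤ) (u : ℝ) :
    SigmaMu μ g (μ ^ m * u) = SigmaMu μ g u := by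
  unfold SigmaMu
  rw [← (Equiv.addRight m).tsum_eq fun k : ℤ => g (μ ^ k * u)]
  simp only [Equiv.coe_addRight, zpow_add₀ hμ, mul_assoc]

variable {g : ℝ → ℂ} {K s μ : ℝ}

theorem summable_norm_apply_zpow_mul (hs : 0 < s)
    (hg : ∀ u > 0, ‖g u‖ ≤ K * Real.exp (-s * |Real.log u|)) (hμ0 : 0 < μ) (hμ : μ ≠ 1) {u : ℝ}
    (hu : 0 < u) : Summable fun k : ℤ => ‖g (μ ^ k * u)‖ :=
  .of_nonneg_of_le (fun _ => norm_nonneg _) (norm_apply_zpow_mul_le hs.le hg hμ0 hu) <|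
    (summable_pow_natAbs (Real.exp_nonneg _) (exp_neg_mul_abs_log_lt_one hs hμ0 hμ)).mul_left _

theorem exists_norm_SigmaMu_le (hs : 0 < s)
    (hg : ∀ u > 0, ‖g u‖ ≤ K * Real.exp (-s * |Real.log u|)) (hμ0 : 0 < μ) (hμ : μ ≠ 1) :
    ∃ C, ∀ u ∈ Ioi 0, ‖SigmaMu μ g u‖ ≤ C := by
  have hK : 0 ≤ K := by simpa using (norm_nonneg _).trans (hg 1 one_pos)
  have hgeo := summable_pow_natAbs (Real.exp_nonneg _) (exp_neg_mul_abs_log_lt_one hs hμ0 hμ)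
  refine ⟨∑' k : ℤ, K * Real.exp (s * |Real.log μ|) * Real.exp (-s * |Real.log μ|) ^ k.natAbs,
    fun u hu => ?_⟩
  obtain ⟨m, hm⟩ := exists_abs_log_zpow_mul_le hμ0 hμ hu
  rw [← SigmaMu_zpow_mul hμ0.ne' g m u]
  refine tsum_of_norm_bounded (hgeo.mul_left _).hasSum fun k => ?_
  grw [norm_apply_zpow_mul_le hs.le hg hμ0 (mul_pos (zpow_pos hμ0 m) hu) k, hm]

end OrbitSum

theorem exp_neg_half_mul_abs_log {u : ℝ} (hu : 0 < u) :
    Real.exp (-(1 / 2) * |Real.log u|) = √u * min 1 u⁻¹ := by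
  have hsqrt : Real.exp (Real.log u / 2) = √u := by rw [Real.exp_half, Real.exp_log hu]
  rcases le_total u 1 with h | h
  · rw [abs_of_nonpos (Real.log_nonpos hu.le h), min_eq_left ((one_le_inv₀ hu).2 h), ← hsqrt]
    ring_nf
  · rw [abs_of_nonneg (Real.log_nonneg h), min_eq_right (inv_le_one_of_one_le₀ h),
      ← div_eq_mul_inv, Real.sqrt_div_self, ← hsqrt, ← Real.exp_neg]
    ring_nf

theorem norm_Emap (f : ℝ → ℂ) {u : ℝ} (hu : 0 < u) :
    ‖Emap f u‖ = √u * ‖∑' n : ℕ, f ((n + 1) * u)‖ := by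
  rw [Emap, norm_mul, Complex.norm_cpow_eq_rpow_re_of_pos hu, Real.sqrt_eq_rpow]
  norm_num

theorem exists_norm_Emap_le {f : ℝ → ℂ} {a C : ℝ} (hBV : BoundedVariationOn f (Ioi 0))
    (hi : IntegrableOn f (Ioi 0)) (hint : ∫ t in Ioi (0 : ℝ), f t = 0) (ha : 1 < a)
    (hf : ∀ x > 0, ‖f x‖ ≤ C * x ^ (-a)) :
    ∃ K, ∀ u > 0, ‖Emap f u‖ ≤ K * Real.exp (-(1 / 2) * |Real.log u|) := by
  set V := (eVariationOn f (Ioi 0)).toReal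
  set Z := ∑' n : ℕ, ((n + 1 : ℕ) : ℝ) ^ (-a)
  have : 0 ≤ C := by simpa using (norm_nonneg _).trans (hf 1 one_pos)
  have : 0 ≤ Z := tsum_nonneg fun n => by positivity
  refine ⟨max V (C * Z), fun u hu => ?_⟩
  have hsum : ‖∑' n : ℕ, f ((n + 1) * u)‖ ≤ max V (C * Z) * min 1 u⁻¹ := by
    rcases le_total u 1 with h | h
    · rw [min_eq_left ((one_le_inv₀ hu).2 h), mul_one]
      exact (norm_tsum_le_eVariationOn_of_integral_eq_zero hBV hi hint hu
        (summable_apply_nat_mul ha hf hu)).trans (le_max_left _ _)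
    · rw [min_eq_right (inv_le_one_of_one_le₀ h), ← Real.rpow_neg_one]
      calc _ ≤ C * u ^ (-a) * Z := norm_tsum_apply_nat_mul_le ha hf hu
        _ ≤ C * u ^ (-1 : ℝ) * Z := by gcongr
        _ = C * Z * u ^ (-1 : ℝ) := by ring
        _ ≤ _ := by gcongr; exact le_max_right _ _
  rw [norm_Emap f hu, exp_neg_half_mul_abs_log hu, mul_left_comm]
  gcongr

theorem stmt3_general (f : ℝ → ℂ) (hBV : BoundedVariationOn f (Ioi 0)) {a : ℝ} (ha : 1 < a)
    (hdecay : f =O[atTop] fun u : ℝ => u ^ (-a)) (hint : ∫ t in Ioi (0 : ℝ), f t = 0)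
    {μ : ℝ} (hμ0 : 0 < μ) (hμ : μ ≠ 1) :
    (∀ u : ℝ, 0 < u → Summable fun k : ℤ => ‖Emap f (μ ^ k * u)‖) ∧
    (∃ C : ℝ, ∀ u ∈ Ioi (0:ℝ), ‖SigmaMu μ (Emap f) u‖ ≤ C) ∧
    Measurable (fun u : Ioi (0:ℝ) => SigmaMu μ (Emap f) u) ∧
    (∀ u : ℝ, 0 < u → SigmaMu μ (Emap f) (μ * u) = SigmaMu μ (Emap f) u) := by
  obtain ⟨M, hM⟩ := exists_norm_le_of_boundedVariationOn hBV
  obtain ⟨C, hf⟩ := exists_norm_le_mul_rpow_neg (by positivity) hM hdecay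
  have hi := integrableOn_Ioi_of_boundedVariationOn_of_isBigO_rpow hBV ha hdecay
  obtain ⟨K, hK⟩ := exists_norm_Emap_le hBV hi hint ha hf
  have hmeas := measurable_Emap
    (measurable_domRestrict_of_locallyBoundedVariationOn hBV.locallyBoundedVariationOn)
    fun _ => summable_apply_nat_mul ha hf
  have hsum : ∀ u > 0, Summable fun k : ℤ => ‖Emap f (μ ^ k * u)‖ :=
    fun _ => summable_norm_apply_zpow_mul one_half_pos hK hμ0 hμ
  refine ⟨hsum, exists_norm_SigmaMu_le one_half_pos hK hμ0 hμ,
    measurable_SigmaMu hmeas hμ0 fun u hu => (hsum u hu).of_norm, fun u _ => ?_⟩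
  simpa using SigmaMu_zpow_mul hμ0.ne' (Emap f) 1 u

theorem stmt3 (f : ℝ → ℂ)
    (hBV : BoundedVariationOn f (Ioi 0))
    (hdecay : ∀ N : ℕ, f =O[atTop] fun u : ℝ => u ^ (-(N:ℤ)))
    (h0 : f =O[nhdsWithin 0 (Ioi 0)] fun u : ℝ => u ^ 2)
    (hint : ∫ t in Ioi (0:ℝ), f t = 0)
    (μ : ℝ) (hμ : 1 < μ) :
    (∀ u : ℝ, 0 < u → Summable fun k : ℤ => ‖Emap f (μ ^ k * u)‖) ∧
    (∃ C : ℝ, ∀ u ∈ Ioi (0:ℝ), ‖SigmaMu μ (Emap f) u‖ ≤ C) ∧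
    Measurable (fun u : Ioi (0:ℝ) => SigmaMu μ (Emap f) u) ∧
    (∀ u : ℝ, 0 < u → SigmaMu μ (Emap f) (μ * u) = SigmaMu μ (Emap f) u) :=
  stmt3_general f hBV one_lt_two (by simpa [← Real.rpow_intCast] using hdecay 2) hint
    (one_pos.trans hμ) hμ.ne'
end

section
/- Let H be the operator (Hf)(x) = x·f′(x) on Schwartz functions. The map f ↦ (1 + H)f = f + x·f′ is a linear bijection from the space of even Schwartz functions on ℝ onto the space of even Schwartz functions g on ℝ with ∫_ℝ g(x) dx = 0. -/
/-!
Since `(1 + H) f = (x f)'`, the operator is injective and its values have integral zero over each of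
the half-lines `(-∞, 0]` and `(0, ∞)`. Conversely, let `g` be a Schwartz function with both
half-line integrals zero. The mean `f x = ∫ t in 0..1, g (t x)` is smooth and satisfies
`x f x = ∫ t in 0..x, g t`, hence `(1 + H) f = (x f)' = g`. The primitive of `g` vanishing at `0` is
minus a tail integral of `g` on `(0, ∞)`, and likewise on the left, so `x f`, and with it `f`,
decays rapidly. Finally `x f⁽ⁿ⁺¹⁾ = g⁽ⁿ⁾ - (n + 1) f⁽ⁿ⁾` propagates the decay to all derivatives.
The operator commutes with the reflection `x ↦ -x`, and for even `g` the two half-line conditions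
amount to `∫ g = 0`.
-/

open MeasureTheory Set

/-- A function `ℝ → ℂ` is Schwartz if it is (the underlying function of) a Schwartz map. -/
def IsSchwartz (f : ℝ → ℂ) : Prop := ∃ F : SchwartzMap ℝ ℂ, ⇑F = f

/-- The operator `(1 + H) f = f + x f'` where `(H f)(x) = x f'(x)`. -/
noncomputable def onePlusH (f : ℝ → ℂ) : ℝ → ℂ := fun x => f x + x * deriv f x

open Filter Topology
open scoped SchwartzMap ContDiff

section

variable {E : Type*} [NormedAddCommGroup E] [NormedSpace ℝ E] {f g : ℝ → E}

/-! ### The operator on vector-valued functions -/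

/-- The operator `1 + H`, `(H f)(x) = x f'(x)`, on functions with values in a real normed space. -/
noncomputable def oneAddEuler (f : ℝ → E) : ℝ → E := fun x ↦ f x + x • deriv f x

theorem onePlusH_eq_oneAddEuler : onePlusH = oneAddEuler := by
  ext f x
  simp only [onePlusH, oneAddEuler, Complex.real_smul]

theorem oneAddEuler_smul_add {R : Type*} [Monoid R] [DistribMulAction R E] [SMulCommClass ℝ R E]
    [ContinuousConstSMul R E] (hf : Differentiable ℝ f) (hg : Differentiable ℝ g) (a : R) :
    oneAddEuler (a • f + g) = a • oneAddEuler f + oneAddEuler g := by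
  ext x
  have hderiv : deriv (a • f + g) x = a • deriv f x + deriv g x :=
    (((hf x).hasDerivAt.const_smul a).add (hg x).hasDerivAt).deriv
  simp only [oneAddEuler, hderiv, Pi.add_apply, Pi.smul_apply, smul_add, smul_comm x a]
  abel

theorem hasDerivAt_id_smul {x : ℝ} (hf : DifferentiableAt ℝ f x) :
    HasDerivAt (fun y ↦ y • f y) (oneAddEuler f x) x := by
  simpa only [oneAddEuler, id, one_smul, add_comm] using! (hasDerivAt_id x).smul hf.hasDerivAt

theorem oneAddEuler_comp_neg (f : ℝ → E) (x : ℝ) :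
    oneAddEuler (fun y ↦ f (-y)) x = oneAddEuler f (-x) := by
  simp only [oneAddEuler, deriv_comp_neg, smul_neg, neg_smul]

theorem eq_of_oneAddEuler_eq (hf : Differentiable ℝ f) (hg : Differentiable ℝ g)
    (h : oneAddEuler f = oneAddEuler g) : f = g := by
  have hderiv (x : ℝ) : HasDerivAt (fun y ↦ y • f y - y • g y) 0 x := by
    simpa only [h, sub_self] using! (hasDerivAt_id_smul (hf x)).sub (hasDerivAt_id_smul (hg x))
  have hconst (x : ℝ) : x • f x - x • g x = 0 := by
    simpa only [zero_smul, sub_self] using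
      is_const_of_deriv_eq_zero (fun y ↦ (hderiv y).differentiableAt) (fun y ↦ (hderiv y).deriv) x 0
  ext x
  rcases eq_or_ne x 0 with rfl | hx
  · simpa only [oneAddEuler, zero_smul, add_zero] using congrFun h 0
  · exact smul_right_injective E hx (sub_eq_zero.mp (hconst x))

theorem even_oneAddEuler_iff (hf : Differentiable ℝ f) :
    (oneAddEuler f).Even ↔ f.Even := by
  have hreflect : Differentiable ℝ fun y ↦ f (-y) := hf.comp differentiable_neg
  refine ⟨fun h ↦ congrFun (eq_of_oneAddEuler_eq hreflect hf ?_), fun h x ↦ ?_⟩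
  · ext x
    rw [oneAddEuler_comp_neg, h x]
  · rw [← oneAddEuler_comp_neg, funext h]

theorem iteratedDeriv_oneAddEuler {n : ℕ} (hf : ContDiff ℝ (n + 1) f) (x : ℝ) :
    iteratedDeriv n (oneAddEuler f) x =
      (n + 1 : ℝ) • iteratedDeriv n f x + x • iteratedDeriv (n + 1) f x := by
  induction n generalizing x with
  | zero => simp [oneAddEuler]
  | succ n ih =>
    have hdiff (m : ℕ) (hm : m < n + 2) : Differentiable ℝ (iteratedDeriv m f) :=
      hf.differentiable_iteratedDeriv m (by exact_mod_cast hm)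
    have hterms := ((hdiff n (by lia) x).hasDerivAt.const_smul (n + 1 : ℝ)).add
      (hasDerivAt_id_smul (hdiff (n + 1) (by lia) x))
    rw [iteratedDeriv_succ, funext (ih (hf.of_le (by exact_mod_cast Nat.le_succ _)))]
    refine hterms.deriv.trans ?_
    simp only [oneAddEuler, ← iteratedDeriv_succ]
    push_cast
    module

/-! ### Rapid decay -/

/-- `f` decays rapidly: it is bounded after multiplication by any power of the variable. This is the
order-zero part of the Schwartz condition, without smoothness. -/
def RapidlyDecaying (f : ℝ → E) : Prop := ∀ k : ℕ, ∃ C : ℝ, ∀ x, ‖x‖ ^ k * ‖f x‖ ≤ C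

theorem RapidlyDecaying.sub {V : Type*} [NormedAddCommGroup V] {f g : ℝ → V}
    (hf : RapidlyDecaying f) (hg : RapidlyDecaying g) :
    RapidlyDecaying (fun x ↦ f x - g x) := fun k ↦ by
  obtain ⟨C, hC⟩ := hf k
  obtain ⟨D, hD⟩ := hg k
  refine ⟨C + D, fun x ↦ ?_⟩
  calc ‖x‖ ^ k * ‖f x - g x‖ ≤ ‖x‖ ^ k * (‖f x‖ + ‖g x‖) := by gcongr; exact norm_sub_le _ _
    _ = ‖x‖ ^ k * ‖f x‖ + ‖x‖ ^ k * ‖g x‖ := mul_add _ _ _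
    _ ≤ C + D := add_le_add (hC x) (hD x)

theorem RapidlyDecaying.const_smul (hf : RapidlyDecaying f) (c : ℝ) :
    RapidlyDecaying (fun x ↦ c • f x) := fun k ↦ by
  obtain ⟨C, hC⟩ := hf k
  refine ⟨‖c‖ * C, fun x ↦ ?_⟩
  rw [norm_smul, mul_left_comm]
  gcongr
  exact hC x

theorem RapidlyDecaying.of_id_smul (hf : Continuous f) (h : RapidlyDecaying fun x ↦ x • f x) :
    RapidlyDecaying f := by
  rintro (_ | k)
  · obtain ⟨C, hC⟩ := h 0
    obtain ⟨D, hD⟩ := (isCompact_closedBall (0 : ℝ) 1).exists_bound_of_continuousOn hf.continuousOn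
    refine ⟨max C D, fun x ↦ ?_⟩
    rw [pow_zero, one_mul]
    rcases le_or_gt ‖x‖ 1 with hx | hx
    · exact (hD x (mem_closedBall_zero_iff.mpr hx)).trans (le_max_right _ _)
    · calc ‖f x‖ ≤ ‖x‖ * ‖f x‖ := le_mul_of_one_le_left (norm_nonneg _) hx.le
        _ ≤ C := by simpa only [pow_zero, one_mul, norm_smul] using hC x
        _ ≤ max C D := le_max_left _ _
  · obtain ⟨C, hC⟩ := h k
    refine ⟨C, fun x ↦ ?_⟩
    simpa only [norm_smul, pow_succ, mul_assoc] using hC x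

theorem rapidlyDecaying_iteratedDeriv_schwartz (F : 𝓢(ℝ, E)) (n : ℕ) :
    RapidlyDecaying (iteratedDeriv n F) := fun k ↦
  ⟨SchwartzMap.seminorm ℝ k n F, SchwartzMap.le_seminorm' ℝ k n F⟩

theorem RapidlyDecaying.iteratedDeriv_of_oneAddEuler (hf : ContDiff ℝ ∞ f)
    (hdecay : RapidlyDecaying f) (h : ∀ n, RapidlyDecaying (iteratedDeriv n (oneAddEuler f)))
    (n : ℕ) : RapidlyDecaying (iteratedDeriv n f) := by
  induction n with
  | zero => simpa only [iteratedDeriv_zero] using hdecay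
  | succ n ih =>
    have hid (x : ℝ) : iteratedDeriv n (oneAddEuler f) x - (n + 1 : ℝ) • iteratedDeriv n f x =
        x • iteratedDeriv (n + 1) f x := by
      rw [iteratedDeriv_oneAddEuler (hf.of_le (by exact_mod_cast le_top)), add_sub_cancel_left]
    refine .of_id_smul (hf.continuous_iteratedDeriv (n + 1) (by exact_mod_cast le_top)) ?_
    simpa only [hid] using (h n).sub (ih.const_smul (n + 1 : ℝ))

/-! ### Primitives -/

theorem pow_mul_norm_setIntegral_Ioi_le {k : ℕ} (hmoment : Integrable fun t ↦ ‖t‖ ^ k * ‖g t‖)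
    {x : ℝ} (hx : 0 ≤ x) :
    x ^ k * ‖∫ t in Ioi x, g t‖ ≤ ∫ t, ‖t‖ ^ k * ‖g t‖ := by
  calc x ^ k * ‖∫ t in Ioi x, g t‖ ≤ x ^ k * ∫ t in Ioi x, ‖g t‖ := by
        gcongr
        exact norm_integral_le_integral_norm _
    _ = ∫ t in Ioi x, x ^ k * ‖g t‖ := (integral_const_mul _ _).symm
    _ ≤ ∫ t in Ioi x, ‖t‖ ^ k * ‖g t‖ := by
        refine integral_mono_of_nonneg (.of_forall fun t ↦ by positivity) hmoment.integrableOn ?_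
        filter_upwards [ae_restrict_mem measurableSet_Ioi] with t ht
        gcongr
        exact (le_of_lt ht).trans (le_abs_self t)
    _ ≤ ∫ t, ‖t‖ ^ k * ‖g t‖ :=
        setIntegral_le_integral hmoment (.of_forall fun t ↦ by positivity)

theorem pow_mul_norm_intervalIntegral_le {k : ℕ} (hg : Integrable g)
    (hmoment : Integrable fun t ↦ ‖t‖ ^ k * ‖g t‖) (hpos : ∫ t in Ioi 0, g t = 0)
    {x : ℝ} (hx : 0 ≤ x) :
    x ^ k * ‖∫ t in 0..x, g t‖ ≤ ∫ t, ‖t‖ ^ k * ‖g t‖ := by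
  have htail : ∫ t in 0..x, g t = -∫ t in Ioi x, g t :=
    eq_neg_of_add_eq_zero_left <|
      (intervalIntegral.integral_interval_add_Ioi hg.integrableOn hg.integrableOn).trans hpos
  rw [htail, norm_neg]
  exact pow_mul_norm_setIntegral_Ioi_le hmoment hx

theorem rapidlyDecaying_intervalIntegral (hg : Integrable g)
    (hmoment : ∀ k : ℕ, Integrable fun t ↦ ‖t‖ ^ k * ‖g t‖)
    (hneg : ∫ t in Iic 0, g t = 0) (hpos : ∫ t in Ioi 0, g t = 0) :
    RapidlyDecaying fun x ↦ ∫ t in 0..x, g t := fun k ↦ by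
  refine ⟨∫ t, ‖t‖ ^ k * ‖g t‖, fun x ↦ ?_⟩
  rcases le_total 0 x with hx | hx
  · rw [Real.norm_of_nonneg hx]
    exact pow_mul_norm_intervalIntegral_le hg (hmoment k) hpos hx
  · have hreflect : ∫ t in 0..-x, g (-t) = -∫ t in 0..x, g t := by
      rw [intervalIntegral.integral_comp_neg, neg_neg, neg_zero, intervalIntegral.integral_symm]
    have hmoment_neg : Integrable fun t ↦ ‖t‖ ^ k * ‖g (-t)‖ := by
      simpa only [norm_neg] using (hmoment k).comp_neg
    have hpos_neg : ∫ t in Ioi 0, g (-t) = 0 := by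
      rw [integral_comp_neg_Ioi, neg_zero, hneg]
    have hbound :=
      pow_mul_norm_intervalIntegral_le hg.comp_neg hmoment_neg hpos_neg (neg_nonneg.mpr hx)
    rw [← integral_neg_eq_self (fun t ↦ ‖t‖ ^ k * ‖g t‖), Real.norm_of_nonpos hx]
    simpa only [hreflect, norm_neg] using hbound

theorem setIntegral_Iic_eq_setIntegral_Ioi_of_even (hg : g.Even) :
    ∫ t in Iic 0, g t = ∫ t in Ioi 0, g t := by
  simpa only [hg.eq, neg_zero] using integral_comp_neg_Iic 0 g

theorem setIntegral_Ioi_eq_zero_of_even (hg : g.Even) (hint : Integrable g)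
    (h : ∫ t, g t = 0) : ∫ t in Ioi 0, g t = 0 := by
  rw [← intervalIntegral.integral_Iic_add_Ioi (b := 0) hint.integrableOn hint.integrableOn,
    setIntegral_Iic_eq_setIntegral_Ioi_of_even hg, ← two_smul ℝ] at h
  exact (smul_eq_zero_iff_right two_ne_zero).mp h

/-! ### Means over dilations -/

/-- The weighted mean `x ↦ ∫ t in 0..1, tⁿ g (t x)` of the dilates of `g`. The case `n = 0` inverts
`1 + H`; the higher moments occur in its derivatives. -/
noncomputable def dilationMoment (n : ℕ) (g : ℝ → E) (x : ℝ) : E :=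
  ∫ t in (0 : ℝ)..1, t ^ n • g (t * x)

theorem id_smul_dilationMoment_zero (g : ℝ → E) (x : ℝ) :
    x • dilationMoment 0 g x = ∫ t in 0..x, g t := by
  simpa only [dilationMoment, pow_zero, one_smul, zero_mul, one_mul] using
    intervalIntegral.smul_integral_comp_mul_right (a := 0) (b := 1) g x

theorem continuous_dilationMoment (n : ℕ) (hg : Continuous g) :
    Continuous (dilationMoment n g) :=
  intervalIntegral.continuous_parametric_intervalIntegral_of_continuous'
    (by unfold Function.uncurry; fun_prop) 0 1

theorem hasDerivAt_dilationMoment (n : ℕ) (hg : ContDiff ℝ 1 g) (x : ℝ) :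
    HasDerivAt (dilationMoment n g) (dilationMoment (n + 1) (deriv g) x) x := by
  have : Continuous (deriv g) := hg.continuous_deriv le_rfl
  obtain ⟨C, hC⟩ := ((isCompact_Icc (a := (0 : ℝ)) (b := 1)).prod
    (isCompact_closedBall x 1)).exists_bound_of_continuousOn
    (f := fun p : ℝ × ℝ ↦ p.1 ^ (n + 1) • deriv g (p.1 * p.2)) (by fun_prop)
  have hderiv (t y : ℝ) :
      HasDerivAt (fun y ↦ t ^ n • g (t * y)) (t ^ (n + 1) • deriv g (t * y)) y := by
    have hdilate := (hg.differentiable one_ne_zero (t * y)).hasDerivAt.scomp y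
      ((hasDerivAt_id y).const_mul t)
    simpa only [pow_succ, mul_smul, mul_one] using! hdilate.const_smul (t ^ n)
  refine (intervalIntegral.hasDerivAt_integral_of_dominated_loc_of_deriv_le
    (F := fun y t ↦ t ^ n • g (t * y)) (F' := fun y t ↦ t ^ (n + 1) • deriv g (t * y))
    (bound := fun _ ↦ C) (Metric.closedBall_mem_nhds x one_pos)
    (.of_forall fun y ↦ Continuous.aestronglyMeasurable (by fun_prop))
    (Continuous.intervalIntegrable (by fun_prop) 0 1)
    (Continuous.aestronglyMeasurable (by fun_prop))
    (.of_forall fun t ht y hy ↦ hC (t, y) ⟨?_, hy⟩)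
    intervalIntegrable_const (.of_forall fun t _ y _ ↦ hderiv t y)).2
  rw [uIoc_of_le zero_le_one] at ht
  exact Ioc_subset_Icc_self ht

theorem contDiff_dilationMoment {m : ℕ} (n : ℕ) (hg : ContDiff ℝ m g) :
    ContDiff ℝ m (dilationMoment n g) := by
  induction m generalizing n g with
  | zero => exact contDiff_zero.mpr (continuous_dilationMoment n hg.continuous)
  | succ m ih =>
    have hderiv := hasDerivAt_dilationMoment n (hg.of_le (by exact_mod_cast Nat.le_add_left 1 m))
    rw [Nat.cast_succ, contDiff_succ_iff_deriv] at hg ⊢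
    refine ⟨fun x ↦ (hderiv x).differentiableAt, by simp, ?_⟩
    rw [funext fun x ↦ (hderiv x).deriv]
    exact ih (n + 1) hg.2.2

theorem oneAddEuler_dilationMoment_zero [CompleteSpace E] (hg : ContDiff ℝ 1 g) :
    oneAddEuler (dilationMoment 0 g) = g := by
  ext x
  have hprimitive := hasDerivAt_id_smul (hasDerivAt_dilationMoment 0 hg x).differentiableAt
  simp only [id_smul_dilationMoment_zero] at hprimitive
  exact hprimitive.unique (hg.continuous.integral_hasStrictDerivAt 0 x).hasDerivAt

/-! ### The operator on Schwartz functions -/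

/-- The Schwartz functions `ℝ → E` as a set of plain functions, the domain of `oneAddEuler`. -/
def schwartzFunctions (E : Type*) [NormedAddCommGroup E] [NormedSpace ℝ E] : Set (ℝ → E) :=
  range (DFunLike.coe : 𝓢(ℝ, E) → ℝ → E)

theorem mem_schwartzFunctions_of_rapidlyDecaying (hf : ContDiff ℝ ∞ f)
    (h : ∀ n, RapidlyDecaying (iteratedDeriv n f)) : f ∈ schwartzFunctions E := by
  refine ⟨⟨f, hf, fun k n ↦ ?_⟩, rfl⟩
  simpa only [norm_iteratedFDeriv_eq_norm_iteratedDeriv] using h n k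

theorem id_smul_mem_schwartzFunctions (hf : f ∈ schwartzFunctions E) :
    (fun x ↦ x • f x) ∈ schwartzFunctions E := by
  obtain ⟨F, rfl⟩ := hf
  exact ⟨SchwartzMap.smulLeftCLM E (id : ℝ → ℝ) F,
    funext fun x ↦ SchwartzMap.smulLeftCLM_apply_apply (by fun_prop) F x⟩

theorem deriv_mem_schwartzFunctions (hf : f ∈ schwartzFunctions E) :
    deriv f ∈ schwartzFunctions E := by
  obtain ⟨F, rfl⟩ := hf
  exact ⟨SchwartzMap.derivCLM ℝ E F, funext (SchwartzMap.derivCLM_apply ℝ F)⟩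

theorem integrable_of_mem_schwartzFunctions (hf : f ∈ schwartzFunctions E) : Integrable f := by
  obtain ⟨F, rfl⟩ := hf
  exact F.integrable

theorem differentiable_of_mem_schwartzFunctions (hf : f ∈ schwartzFunctions E) :
    Differentiable ℝ f := by
  obtain ⟨F, rfl⟩ := hf
  exact F.differentiable

theorem tendsto_cocompact_of_mem_schwartzFunctions (hf : f ∈ schwartzFunctions E) :
    Tendsto f (cocompact ℝ) (𝓝 0) := by
  obtain ⟨F, rfl⟩ := hf
  exact zero_at_infty F

theorem oneAddEuler_mem_schwartzFunctions (hf : f ∈ schwartzFunctions E) :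
    oneAddEuler f ∈ schwartzFunctions E := by
  have hdiff := differentiable_of_mem_schwartzFunctions hf
  rw [← funext fun x ↦ (hasDerivAt_id_smul (hdiff x)).deriv]
  exact deriv_mem_schwartzFunctions (id_smul_mem_schwartzFunctions hf)

variable [CompleteSpace E]

theorem setIntegral_Iic_oneAddEuler (hf : f ∈ schwartzFunctions E) :
    ∫ x in Iic 0, oneAddEuler f x = 0 := by
  have hdiff := differentiable_of_mem_schwartzFunctions hf
  have hint := integrable_of_mem_schwartzFunctions (oneAddEuler_mem_schwartzFunctions hf)
  have hlim := tendsto_cocompact_of_mem_schwartzFunctions (id_smul_mem_schwartzFunctions hf)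
  simpa only [zero_smul, sub_zero] using
    integral_Iic_of_hasDerivAt_of_tendsto' (a := 0)
      (fun x _ ↦ hasDerivAt_id_smul (hdiff x)) hint.integrableOn
      (hlim.mono_left atBot_le_cocompact)

theorem setIntegral_Ioi_oneAddEuler (hf : f ∈ schwartzFunctions E) :
    ∫ x in Ioi 0, oneAddEuler f x = 0 := by
  have hdiff := differentiable_of_mem_schwartzFunctions hf
  have hint := integrable_of_mem_schwartzFunctions (oneAddEuler_mem_schwartzFunctions hf)
  have hlim := tendsto_cocompact_of_mem_schwartzFunctions (id_smul_mem_schwartzFunctions hf)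
  simpa only [zero_smul, sub_zero] using
    integral_Ioi_of_hasDerivAt_of_tendsto' (a := 0)
      (fun x _ ↦ hasDerivAt_id_smul (hdiff x)) hint.integrableOn
      (hlim.mono_left atTop_le_cocompact)

theorem dilationMoment_zero_mem_schwartzFunctions (hg : g ∈ schwartzFunctions E)
    (hneg : ∫ x in Iic 0, g x = 0) (hpos : ∫ x in Ioi 0, g x = 0) :
    dilationMoment 0 g ∈ schwartzFunctions E := by
  obtain ⟨G, rfl⟩ := hg
  have hsmooth : ContDiff ℝ ∞ (dilationMoment 0 G) :=
    contDiff_infty.mpr fun m ↦ contDiff_dilationMoment 0 (G.smooth m)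
  have hdecay : RapidlyDecaying (dilationMoment 0 G) := by
    refine .of_id_smul hsmooth.continuous ?_
    simpa only [id_smul_dilationMoment_zero] using
      rapidlyDecaying_intervalIntegral G.integrable (G.integrable_pow_mul volume) hneg hpos
  refine mem_schwartzFunctions_of_rapidlyDecaying hsmooth
    (hdecay.iteratedDeriv_of_oneAddEuler hsmooth fun n ↦ ?_)
  rw [oneAddEuler_dilationMoment_zero (G.smooth 1)]
  exact rapidlyDecaying_iteratedDeriv_schwartz G n

theorem bijOn_oneAddEuler :
    BijOn oneAddEuler (schwartzFunctions E)
      {g | g ∈ schwartzFunctions E ∧ ∫ x in Iic 0, g x = 0 ∧ ∫ x in Ioi 0, g x = 0} := by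
  refine ⟨fun f hf ↦ ?_, fun f hf g hg ↦ ?_, fun g ⟨hg, hneg, hpos⟩ ↦ ?_⟩
  · exact ⟨oneAddEuler_mem_schwartzFunctions hf, setIntegral_Iic_oneAddEuler hf,
      setIntegral_Ioi_oneAddEuler hf⟩
  · exact eq_of_oneAddEuler_eq (differentiable_of_mem_schwartzFunctions hf)
      (differentiable_of_mem_schwartzFunctions hg)
  · refine ⟨dilationMoment 0 g, dilationMoment_zero_mem_schwartzFunctions hg hneg hpos, ?_⟩
    obtain ⟨G, rfl⟩ := hg
    exact oneAddEuler_dilationMoment_zero (G.smooth 1)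

theorem bijOn_oneAddEuler_even :
    BijOn oneAddEuler {f | f ∈ schwartzFunctions E ∧ f.Even}
      {g | g ∈ schwartzFunctions E ∧ g.Even ∧ ∫ x, g x = 0} := by
  have hbij := bijOn_oneAddEuler (E := E)
  refine ⟨fun f ⟨hf, heven⟩ ↦ ?_, hbij.injOn.mono fun f hf ↦ hf.1, fun g ⟨hg, heven, hzero⟩ ↦ ?_⟩
  · obtain ⟨hmem, hneg, hpos⟩ := hbij.mapsTo hf
    have hint := integrable_of_mem_schwartzFunctions hmem
    refine ⟨hmem, (even_oneAddEuler_iff (differentiable_of_mem_schwartzFunctions hf)).mpr heven, ?_⟩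
    rw [← intervalIntegral.integral_Iic_add_Ioi (b := 0) hint.integrableOn hint.integrableOn,
      hneg, hpos, add_zero]
  · have hpos := setIntegral_Ioi_eq_zero_of_even heven
      (integrable_of_mem_schwartzFunctions hg) hzero
    have hneg := (setIntegral_Iic_eq_setIntegral_Ioi_of_even heven).trans hpos
    obtain ⟨f, hf, rfl⟩ := hbij.surjOn ⟨hg, hneg, hpos⟩
    have hdiff := differentiable_of_mem_schwartzFunctions hf
    exact ⟨f, ⟨hf, (even_oneAddEuler_iff hdiff).mp heven⟩, rfl⟩

theorem stmt7_general {R : Type*} [Monoid R] [DistribMulAction R E] [SMulCommClass ℝ R E]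
    [ContinuousConstSMul R E] :
    BijOn oneAddEuler (schwartzFunctions E)
      {g | g ∈ schwartzFunctions E ∧ ∫ x in Iic 0, g x = 0 ∧ ∫ x in Ioi 0, g x = 0} ∧
    BijOn oneAddEuler {f | f ∈ schwartzFunctions E ∧ f.Even}
      {g | g ∈ schwartzFunctions E ∧ g.Even ∧ ∫ x, g x = 0} ∧
    ∀ f g : ℝ → E, f ∈ schwartzFunctions E → g ∈ schwartzFunctions E → ∀ a : R,
      oneAddEuler (a • f + g) = a • oneAddEuler f + oneAddEuler g :=
  ⟨bijOn_oneAddEuler, bijOn_oneAddEuler_even, fun _ _ hf hg ↦ oneAddEuler_smul_add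
    (differentiable_of_mem_schwartzFunctions hf) (differentiable_of_mem_schwartzFunctions hg)⟩

end

theorem stmt7 :
    Set.BijOn onePlusH
      {f : ℝ → ℂ | IsSchwartz f ∧ ∀ x, f (-x) = f x}
      {g : ℝ → ℂ | IsSchwartz g ∧ (∀ x, g (-x) = g x) ∧ ∫ x : ℝ, g x = 0} ∧
    (∀ f g : ℝ → ℂ, IsSchwartz f → IsSchwartz g → ∀ a : ℂ,
      onePlusH (a • f + g) = a • onePlusH f + onePlusH g) := by
  rw [onePlusH_eq_oneAddEuler]
  exact stmt7_general.2
end
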